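/- If Z ⊆ an_G({A,Y}∪L), then Z satisfies the graphical adjustment criterion for A,Y,L,N in G if and only if Z is an A–Y cut in H^1. -/

import Mathlib

open Relation Set

namespace CausalGraph

variable {V : Type*} [Fintype V] [DecidableEq V]

/-- `p` is a path in the undirected sense from `u` to `v` along adjacency `Adj`:
a nonempty list of pairwise distinct vertices, consecutive ones adjacent,
starting at `u` and ending at `v`. -/
def IsPath (Adj : V → V → Prop) (u v : V) (p : List V) : Prop :=
  List.Chain' Adj p ∧ p.head? = some u ∧ p.getLast? = some v ∧ p.Nodup

/-- Ancestors of `S` in the digraph `D` (every vertex is an ancestor of itself). -/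
def anc (D : V → V → Prop) (S : Set V) : Set V :=
  {u | ∃ v ∈ S, Relation.ReflTransGen D u v}

/-- Descendants of `S` in the digraph `D` (every vertex is a descendant of itself). -/
def desc (D : V → V → Prop) (S : Set V) : Set V :=
  {u | ∃ v ∈ S, Relation.ReflTransGen D v u}

/-- Parents of vertices of `S` in the digraph `D`. -/
def parents (D : V → V → Prop) (S : Set V) : Set V :=
  {u | ∃ v ∈ S, D u v}

/-- The digraph `D` is acyclic. -/
def Acyclic (D : V → V → Prop) : Prop :=
  ∀ u v, D u v → ¬ Relation.ReflTransGen D v u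

/-- Vertices other than `A` lying on a directed path from `A` to `Y`. -/
def cn (D : V → V → Prop) (A Y : V) : Set V :=
  {v | v ≠ A ∧ Relation.ReflTransGen D A v ∧ Relation.ReflTransGen D v Y}

/-- The forbidden set. -/
def forb (D : V → V → Prop) (A Y : V) : Set V :=
  desc D (cn D A Y) ∪ {A}

/-- Proper back-door graph: delete every edge from `A` into `cn D A Y`. -/
def pbd (D : V → V → Prop) (A Y : V) : V → V → Prop :=
  fun u v => D u v ∧ ¬(u = A ∧ v ∈ cn D A Y)

/-- `y` is an interior vertex of the list `p` with neighbours `x` and `z` on the path. -/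
def InteriorAt (p : List V) (x y z : V) : Prop :=
  ∃ s t : List V, p = s ++ x :: y :: z :: t

/-- The path `p` is blocked by `Z` in the digraph `D`: some interior non-collider
lies in `Z`, or some interior collider has no descendant in `Z`. -/
def Blocked (D : V → V → Prop) (Z : Set V) (p : List V) : Prop :=
  (∃ x y z, InteriorAt p x y z ∧ ¬(D x y ∧ D z y) ∧ y ∈ Z) ∨
  (∃ x y z, InteriorAt p x y z ∧ (D x y ∧ D z y) ∧ ∀ d ∈ desc D {y}, d ∉ Z)

/-- d-separation of `S` and `T` given `Z` in the digraph `D`. -/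
def DSep (D : V → V → Prop) (S T Z : Set V) : Prop :=
  ∀ s ∈ S, ∀ t ∈ T, ∀ p : List V,
    IsPath (fun a b => D a b ∨ D b a) s t p → Blocked D Z p

/-- Moral graph of the subgraph of the digraph `D` induced on `Vs`. -/
def moral (D : V → V → Prop) (Vs : Set V) : SimpleGraph V :=
  SimpleGraph.fromRel (fun u v =>
    u ∈ Vs ∧ v ∈ Vs ∧ (D u v ∨ D v u ∨ ∃ w ∈ Vs, D u w ∧ D v w))

/-- Separation in an undirected graph: every path from `S` to `T` meets `W`. -/
def USep (H : SimpleGraph V) (S T W : Set V) : Prop :=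
  ∀ s ∈ S, ∀ t ∈ T, ∀ p : List V, IsPath H.Adj s t p → ∃ z ∈ W, z ∈ p

/-- `Z` is an `A`–`Y` cut in an undirected graph `H` with vertex set `Vs`. -/
def IsCut (Vs : Set V) (H : SimpleGraph V) (A Y : V) (Z : Set V) : Prop :=
  Z ⊆ Vs ∧ Z ∩ {A, Y} = ∅ ∧ ∀ p : List V, IsPath H.Adj A Y p → ∃ z ∈ Z, z ∈ p

def MinimalCut (Vs : Set V) (H : SimpleGraph V) (A Y : V) (Z : Set V) : Prop :=
  IsCut Vs H A Y Z ∧ ∀ Z' ⊂ Z, ¬ IsCut Vs H A Y Z'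

def MinimumCut (Vs : Set V) (H : SimpleGraph V) (A Y : V) (Z : Set V) : Prop :=
  IsCut Vs H A Y Z ∧ ∀ Z', IsCut Vs H A Y Z' → Z.ncard ≤ Z'.ncard

/-- Connected component of `y` in `H` restricted to the complement of `U`:
vertices reachable from `y` by paths avoiding `U`. -/
def cc (H : SimpleGraph V) (U : Set V) (y : V) : Set V :=
  {w | ∃ p : List V, IsPath H.Adj y w p ∧ ∀ x ∈ p, x ∉ U}

/-- Boundary of `S` in `H`: vertices outside `S` adjacent to some vertex of `S`. -/
def bdry (H : SimpleGraph V) (S : Set V) : Set V :=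
  {v | v ∉ S ∧ ∃ u ∈ S, H.Adj v u}

/-- The partial order `Z₁ ⊴_H Z₂` between `A`–`Y` cuts. -/
def TLE (H : SimpleGraph V) (A Y : V) (Z₁ Z₂ : Set V) : Prop :=
  USep H {Y} (Z₂ \ Z₁) Z₁ ∧ USep H {A} (Z₁ \ Z₂) Z₂

/-- Ancestors of `{A, Y} ∪ L`. -/
def ancAYL (D : V → V → Prop) (A Y : V) (L : Set V) : Set V :=
  anc D ({A, Y} ∪ L)

/-- The moral graph `H⁰` of the proper back-door graph induced on `an_G({A,Y} ∪ L)`. -/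
def H0 (D : V → V → Prop) (A Y : V) (L : Set V) : SimpleGraph V :=
  moral (pbd D A Y) (ancAYL D A Y L)

/-- The set of vertices removed from `H⁰` when constructing `H¹`. -/
def Ignore (D : V → V → Prop) (A Y : V) (L N : Set V) : Set V :=
  (ancAYL D A Y L \ {A, Y}) ∩ ((Set.univ \ N) ∪ forb D A Y)

/-- Vertex set of `H¹`. -/
def H1verts (D : V → V → Prop) (A Y : V) (L N : Set V) : Set V :=
  ancAYL D A Y L \ Ignore D A Y L N

/-- The non-parametric adjustment efficiency graph `H¹`: delete the vertices of
`Ignore`, join two remaining vertices if they are joined in `H⁰` by a path all of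
whose intermediate vertices are in `Ignore`, and join `A` and `Y` to every vertex
of `L`. -/
def H1 (D : V → V → Prop) (A Y : V) (L N : Set V) : SimpleGraph V :=
  SimpleGraph.fromRel (fun u v =>
    u ∈ H1verts D A Y L N ∧ v ∈ H1verts D A Y L N ∧
      ((∃ p : List V, IsPath (H0 D A Y L).Adj u v p ∧
          ∀ x ∈ p, x ≠ u → x ≠ v → x ∈ Ignore D A Y L N) ∨
        (u = A ∧ v ∈ L) ∨ (u = Y ∧ v ∈ L)))

/-- The graphical adjustment criterion for `A, Y, L, N` in the DAG `D`. -/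
def GAC (D : V → V → Prop) (A Y : V) (L N Z : Set V) : Prop :=
  DSep (pbd D A Y) {A} {Y} Z ∧ Z ∩ forb D A Y = ∅ ∧ L ⊆ Z ∧ Z ⊆ N

def MinimalGAC (D : V → V → Prop) (A Y : V) (L N Z : Set V) : Prop :=
  GAC D A Y L N Z ∧ ∀ Z' ⊂ Z, ¬ GAC D A Y L N Z'

def MinimumGAC (D : V → V → Prop) (A Y : V) (L N Z : Set V) : Prop :=
  GAC D A Y L N Z ∧ ∀ Z', GAC D A Y L N Z' → Z.ncard ≤ Z'.ncard

/-- Graphical admissibility of the pair `(L, N)`. -/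
def Admissible (D : V → V → Prop) (A Y : V) (L N : Set V) : Prop :=
  ∃ Z, GAC D A Y L N Z

end CausalGraph

namespace CausalGraph

/-!
By Lauritzen's moralization criterion, in a digraph without antiparallel edges, d-separation of `A`
and `Y` by `Z` is separation by `Z` in the moral graph on the ancestors of `{A, Y} ∪ Z`. In the
proper back-door graph these are the ancestors of `{A, Y} ∪ L` in the original graph as soon as
`L ⊆ Z ⊆ an({A, Y} ∪ L)`, because only edges out of `A` are deleted; hence d-separation is
separation by `Z` in `H⁰`. Eliminating the vertices of `Ignore` does not change which sets disjoint
from `Ignore` separate `A` from `Y`, and the edges from `A` and `Y` to `L` do not matter when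
`L ⊆ Z`, so `H⁰` can be replaced by `H¹`. These last edges form paths `A - l - Y` in `H¹`, which
force every cut to contain `L`, while the vertex set of `H¹` encodes the requirements `Z ⊆ N` and
`Z ∩ forb = ∅`.

For the moralization criterion, an open path may be replaced by an open walk, since cycles can be
cut out of open walks. Interior vertices of an open walk are ancestors of its endpoints or of `Z`,
so skipping its colliders gives a walk in the moral graph. Conversely, an edge of the moral graph
extends an open walk; if this would make a vertex an inactive collider, its directed path to an
endpoint gives an open walk instead.
-/

/-! ### Reachability inside a vertex set -/

section Reachability

variable {V : Type*} {H H' : SimpleGraph V} {I S T : Set V} {a b u v w : V}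

/-- `v` can be reached from `u` by a walk of `H` all of whose vertices lie in `S`. Separation by
`W` is the failure of reachability in `Wᶜ`. -/
def ReachableIn (H : SimpleGraph V) (S : Set V) (u v : V) : Prop :=
  ∃ p : H.Walk u v, ∀ x ∈ p.support, x ∈ S

theorem ReachableIn.refl (hu : u ∈ S) : ReachableIn H S u u :=
  ⟨.nil, by simpa using hu⟩

theorem ReachableIn.symm (h : ReachableIn H S u v) : ReachableIn H S v u := by
  obtain ⟨p, hp⟩ := h
  exact ⟨p.reverse, by simpa using hp⟩

theorem ReachableIn.trans (huv : ReachableIn H S u v) (hvw : ReachableIn H S v w) :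
    ReachableIn H S u w := by
  obtain ⟨p, hp⟩ := huv
  obtain ⟨q, hq⟩ := hvw
  refine ⟨p.append q, fun x hx ↦ ?_⟩
  exact ((p.mem_support_append_iff q).1 hx).elim (hp x) (hq x)

theorem ReachableIn.mono (hST : S ⊆ T) (h : ReachableIn H S u v) : ReachableIn H T u v :=
  h.imp fun _ hp x hx ↦ hST (hp x hx)

theorem ReachableIn.of_adj (h : H.Adj u v) (hu : u ∈ S) (hv : v ∈ S) : ReachableIn H S u v :=
  ⟨h.toWalk, by simp [hu, hv]⟩

theorem ReachableIn.of_forall_adj (h : ReachableIn H S u v)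
    (hadj : ∀ a ∈ S, ∀ b ∈ S, H.Adj a b → ReachableIn H' S a b) : ReachableIn H' S u v := by
  obtain ⟨p, hp⟩ := h
  induction p with
  | nil => exact .refl (hp _ (by simp))
  | cons hab q ih =>
    simp only [SimpleGraph.Walk.support_cons, List.forall_mem_cons] at hp
    exact (hadj _ hp.1 _ (hp.2 _ q.start_mem_support) hab).trans (ih hp.2)

theorem reachableIn_congr (h : ∀ a ∈ S, ∀ b ∈ S, (H.Adj a b ↔ H'.Adj a b)) :
    ReachableIn H S u v ↔ ReachableIn H' S u v :=
  ⟨fun huv ↦ huv.of_forall_adj fun a ha b hb hab ↦ .of_adj ((h a ha b hb).1 hab) ha hb,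
    fun huv ↦ huv.of_forall_adj fun a ha b hb hab ↦ .of_adj ((h a ha b hb).2 hab) ha hb⟩

theorem reachableIn_iff_exists_isPath :
    ReachableIn H S u v ↔ ∃ p : List V, IsPath H.Adj u v p ∧ ∀ x ∈ p, x ∈ S := by
  classical
  constructor
  · rintro ⟨p, hp⟩
    refine ⟨p.bypass.support, ⟨p.bypass.isChain_adj_support, ?_, ?_,
      p.bypass_isPath.support_nodup⟩, fun x hx ↦ hp x (p.support_bypass_subset_support hx)⟩
    · rw [List.head?_eq_some_head p.bypass.support_ne_nil, SimpleGraph.Walk.head_support]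
    · rw [List.getLast?_eq_some_getLast p.bypass.support_ne_nil,
        SimpleGraph.Walk.getLast_support]
  · rintro ⟨p, ⟨hchain, hhead, hlast, -⟩, hp⟩
    have hne : p ≠ [] := by rintro rfl; simp at hhead
    have hchain : p.IsChain H.Adj := hchain
    refine ⟨(SimpleGraph.Walk.ofSupport p hne hchain).copy
      (List.head_eq_iff_head?_eq_some hne |>.2 hhead)
      (List.getLast_eq_iff_getLast?_eq_some hne |>.2 hlast), ?_⟩
    simpa only [SimpleGraph.Walk.support_copy, SimpleGraph.Walk.support_ofSupport] using hp

theorem uSep_iff_forall_not_reachableIn {W : Set V} :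
    USep H S T W ↔ ∀ s ∈ S, ∀ t ∈ T, ¬ ReachableIn H Wᶜ s t := by
  simp only [USep, reachableIn_iff_exists_isPath, mem_compl_iff]
  grind

theorem uSep_singleton_iff_not_reachableIn {W : Set V} :
    USep H {u} {v} W ↔ ¬ ReachableIn H Wᶜ u v := by
  simp [uSep_iff_forall_not_reachableIn]

/-- The graph obtained from `H` by eliminating `I`: two distinct vertices outside `I` are adjacent
when `H` joins them by a path with all intermediate vertices in `I`. The vertices of `I` are kept as
isolated vertices. -/
def eliminate (H : SimpleGraph V) (I : Set V) : SimpleGraph V where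
  Adj a b := a ≠ b ∧ a ∉ I ∧ b ∉ I ∧ ReachableIn H ({a, b} ∪ I) a b
  symm := ⟨fun a b ⟨hne, ha, hb, h⟩ ↦ ⟨hne.symm, hb, ha, by rw [Set.pair_comm]; exact h.symm⟩⟩
  loopless := ⟨fun _ h ↦ h.1 rfl⟩

theorem ReachableIn.eliminate_of_reachableIn_insert (hbv : ReachableIn H S b v)
    (hub : ReachableIn H (insert u I) u b) (huS : u ∈ S) (hu : u ∉ I) (hv : v ∉ I) :
    ReachableIn (eliminate H I) S u v := by
  obtain ⟨p, hp⟩ := hbv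
  induction p generalizing u with
  | @nil b =>
    obtain ⟨q, hq⟩ := hub
    obtain rfl : b = u := (hq b q.end_mem_support).resolve_right hv
    exact .refl huS
  | @cons b c v hbc p ih =>
    simp only [SimpleGraph.Walk.support_cons, List.forall_mem_cons] at hp
    have hcS : c ∈ S := hp.2 c p.start_mem_support
    have hub_mem : b ∈ insert u I := hub.elim fun q hq ↦ hq b q.end_mem_support
    by_cases hc : c ∈ insert u I
    · exact ih (hub.trans (.of_adj hbc hub_mem hc)) huS hu hv hp.2
    have huc : (eliminate H I).Adj u c := by
      have hsub : insert u I ⊆ {u, c} ∪ I := by grind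
      exact ⟨by grind, hu, by grind, (hub.mono hsub).trans (.of_adj hbc (hsub hub_mem) (by simp))⟩
    exact (ReachableIn.of_adj huc huS hcS).trans
      (ih (.refl (mem_insert c I)) hcS (by grind) hv hp.2)

theorem reachableIn_eliminate_iff (hIS : I ⊆ S) (huS : u ∈ S) (hu : u ∉ I) (hv : v ∉ I) :
    ReachableIn (eliminate H I) S u v ↔ ReachableIn H S u v := by
  constructor
  · refine fun h ↦ h.of_forall_adj fun a ha b hb hab ↦ hab.2.2.2.mono ?_
    exact union_subset (pair_subset ha hb) hIS
  · exact fun h ↦ h.eliminate_of_reachableIn_insert (.refl (mem_insert u I)) huS hu hv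

end Reachability

/-! ### d-separation and moral graphs -/

section DSeparation

variable {V : Type*} {D : V → V → Prop} {S T U Z : Set V} {p q s t : List V} {a b u v w x y z : V}

theorem subset_anc : S ⊆ anc D S :=
  fun v hv ↦ ⟨v, hv, .refl⟩

theorem anc_mono (hST : S ⊆ T) : anc D S ⊆ anc D T :=
  fun _ ⟨v, hv, h⟩ ↦ ⟨v, hST hv, h⟩

theorem mem_anc_of_reflTransGen (huv : ReflTransGen D u v) (hv : v ∈ anc D S) : u ∈ anc D S :=
  hv.imp fun _ h ↦ ⟨h.1, huv.trans h.2⟩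

theorem moral_adj : (moral D U).Adj u v ↔
    u ≠ v ∧ u ∈ U ∧ v ∈ U ∧ (D u v ∨ D v u ∨ ∃ w ∈ U, D u w ∧ D v w) := by
  rw [moral, SimpleGraph.fromRel_adj]
  grind

/-- The consecutive vertices `x`, `y`, `z` of a walk do not block it at `y`. -/
def Active (D : V → V → Prop) (Z : Set V) (x y z : V) : Prop :=
  (D x y ∧ D z y → y ∈ anc D Z) ∧ (¬(D x y ∧ D z y) → y ∉ Z)

theorem Active.symm (h : Active D Z x y z) : Active D Z z y x := by
  simpa only [Active, and_comm] using h

/-- A walk in the skeleton of `D`, possibly with repeated vertices, none of whose interior vertices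
blocks it. -/
structure IsOpenWalk (D : V → V → Prop) (Z : Set V) (p : List V) : Prop where
  isChain : p.IsChain fun a b ↦ D a b ∨ D b a
  active : ∀ ⦃x y z⦄, [x, y, z] <:+: p → Active D Z x y z

theorem not_blocked_iff :
    ¬ Blocked D Z p ↔ ∀ ⦃x y z⦄, [x, y, z] <:+: p → Active D Z x y z := by
  have interiorAt_iff (x y z : V) : InteriorAt p x y z ↔ [x, y, z] <:+: p := by
    simp [InteriorAt, List.IsInfix, eq_comm]
  simp only [Blocked, interiorAt_iff, Active, anc, desc, mem_ofPred_eq, mem_singleton_iff,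
    exists_eq_left]
  grind

theorem IsOpenWalk.infix (hp : IsOpenWalk D Z p) (hqp : q <:+: p) : IsOpenWalk D Z q :=
  ⟨hp.isChain.infix hqp, fun _ _ _ h ↦ hp.active (h.trans hqp)⟩

theorem IsOpenWalk.reverse (hp : IsOpenWalk D Z p) : IsOpenWalk D Z p.reverse := by
  refine ⟨by simpa only [List.isChain_reverse, or_comm] using hp.isChain, fun x y z h ↦ ?_⟩
  exact (hp.active (List.reverse_infix.1 (by simpa using h))).symm

theorem isOpenWalk_singleton : IsOpenWalk D Z [v] :=
  ⟨.singleton v, fun x y z h ↦ by simpa using h.length_le⟩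

theorem isOpenWalk_pair (h : D u v ∨ D v u) : IsOpenWalk D Z [u, v] :=
  ⟨List.isChain_pair.2 h, fun x y z h ↦ by simpa using h.length_le⟩

theorem triple_infix_append_cons (h : [x, y, z] <:+: s ++ v :: t) :
    [x, y, z] <:+: s ++ [v] ∨ [x, y, z] <:+: v :: t ∨ (x ∈ s.getLast? ∧ y = v ∧ z ∈ t.head?) := by
  induction s with
  | nil => exact .inr (.inl h)
  | cons a s ih =>
    rw [List.cons_append, List.infix_cons_iff] at h
    obtain h | h := h
    · rcases s with _ | ⟨b, _ | ⟨c, s⟩⟩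
      · cases t <;> simp_all [List.cons_prefix_cons]
      · simp_all [List.cons_prefix_cons]
      · simp_all [List.infix_cons_iff, List.cons_prefix_cons]
    · rcases ih h with h | h | ⟨hx, h⟩
      · exact .inl (List.infix_cons h)
      · exact .inr (.inl h)
      · exact .inr (.inr ⟨by rw [List.getLast?_cons]; grind, h⟩)

theorem IsOpenWalk.append_cons (hs : IsOpenWalk D Z (s ++ [v])) (ht : IsOpenWalk D Z (v :: t))
    (hv : ∀ x ∈ s.getLast?, ∀ z ∈ t.head?, Active D Z x v z) : IsOpenWalk D Z (s ++ v :: t) := by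
  refine ⟨List.isChain_split.2 ⟨hs.isChain, ht.isChain⟩, fun x y z h ↦ ?_⟩
  obtain h | h | ⟨hx, rfl, hz⟩ := triple_infix_append_cons h
  · exact hs.active h
  · exact ht.active h
  · exact hv x hx z hz

theorem IsOpenWalk.mem_anc_or_isChain (hp : IsOpenWalk D Z (a :: b :: t)) (hab : D a b) :
    a ∈ anc D Z ∨ (a :: b :: t).IsChain D := by
  induction t generalizing a b with
  | nil => exact .inr (List.isChain_pair.2 hab)
  | cons c t ih =>
    have hb : b ∈ anc D Z ∨ (b :: c :: t).IsChain D := by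
      by_cases hcb : D c b
      · exact .inl ((hp.active (List.prefix_append [a, b, c] t).isInfix).1 ⟨hab, hcb⟩)
      · have htail := hp.infix (List.suffix_cons a _).isInfix
        exact ih htail ((List.isChain_cons_cons.1 htail.isChain).1.resolve_right hcb)
    exact hb.imp (mem_anc_of_reflTransGen (.single hab)) (.cons_cons hab)

theorem IsOpenWalk.mem_anc_insert_of_head (hp : IsOpenWalk D Z (a :: b :: t)) (hab : D a b)
    (hw : w ∈ (a :: b :: t).getLast?) : a ∈ anc D (insert w Z) := by
  obtain h | h := hp.mem_anc_or_isChain hab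
  · exact anc_mono (subset_insert w Z) h
  · exact ⟨w, mem_insert w Z, List.relationReflTransGen_of_exists_isChain_cons _ h
      (List.getLast_eq_iff_getLast?_eq_some _ |>.2 hw)⟩

theorem IsOpenWalk.mem_anc (hp : IsOpenWalk D Z p) (hu : u ∈ p.head?) (hw : w ∈ p.getLast?)
    (hv : v ∈ p) : v ∈ anc D ({u, w} ∪ Z) := by
  obtain ⟨s, t, rfl⟩ := List.append_of_mem hv
  obtain rfl | ⟨s, x, rfl⟩ := s.eq_nil_or_concat'
  · exact subset_anc (by simp_all)
  rcases t with _ | ⟨z, t⟩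
  · exact subset_anc (by simp_all)
  have hactive : Active D Z x v z := hp.active ⟨s, t, by simp⟩
  have hleft : IsOpenWalk D Z (v :: x :: s.reverse) := by
    simpa using (hp.infix (q := s ++ [x, v]) ⟨[], z :: t, by simp⟩).reverse
  have hright : IsOpenWalk D Z (v :: z :: t) := hp.infix (List.suffix_append _ _).isInfix
  have hvx := (List.isChain_cons_cons.1 hleft.isChain).1
  have hvz := (List.isChain_cons_cons.1 hright.isChain).1
  by_cases hcollider : D x v ∧ D z v
  · exact anc_mono subset_union_right (hactive.1 hcollider)
  by_cases hxv : D x v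
  · refine anc_mono ?_ (hright.mem_anc_insert_of_head (w := w) (by tauto) (by simpa using hw))
    grind
  · refine anc_mono ?_ (hleft.mem_anc_insert_of_head (w := u) (by tauto) ?_)
    · grind
    · cases s <;> simp_all [List.getLast?_cons]

theorem IsOpenWalk.remove_cycle {m : List V} (hp : IsOpenWalk D Z (s ++ v :: (m ++ v :: t))) :
    IsOpenWalk D Z (s ++ v :: t) := by
  refine .append_cons (hp.infix ⟨[], m ++ v :: t, by simp⟩)
    (hp.infix ⟨s ++ v :: m, [], by simp⟩) fun x hx z hz ↦ ?_
  obtain ⟨s, rfl⟩ := List.getLast?_eq_some_iff.1 hx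
  obtain ⟨t, rfl⟩ := List.head?_eq_some_iff.1 hz
  obtain ⟨b, l, hbl⟩ := List.exists_cons_of_ne_nil (l := m ++ [v]) (by simp)
  obtain ⟨c, l', hcl⟩ : ∃ c l', v :: m = l' ++ [c] :=
    ⟨_, _, (List.dropLast_concat_getLast (List.cons_ne_nil v m)).symm⟩
  have hfirst : Active D Z x v b := hp.active ⟨s, l ++ z :: t, by grind⟩
  have hlast : Active D Z c v z := hp.active ⟨s ++ x :: l', t, by grind⟩
  have hloop : IsOpenWalk D Z (v :: b :: l) := hp.infix ⟨s ++ [x], z :: t, by grind⟩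
  -- If cutting the cycle makes `v` a collider that it was at neither visit, then both edges of the
  -- cycle at `v` point out of `v`, so its first collider is a descendant of `v` and an ancestor of
  -- `Z`.
  refine ⟨fun ⟨hxv, hzv⟩ ↦ ?_, fun h hv ↦ h ⟨?_, ?_⟩⟩
  · by_cases hbv : D b v
    · exact hfirst.1 ⟨hxv, hbv⟩
    have hvb : D v b := (List.isChain_cons_cons.1 hloop.isChain).1.resolve_right hbv
    obtain h | h := hloop.mem_anc_or_isChain hvb
    · exact h
    · have hcv : [c, v] <:+: v :: b :: l := ⟨l', [], by grind⟩
      exact hlast.1 ⟨List.isChain_pair.1 (h.infix hcv), hzv⟩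
  · by_contra hxv
    exact hfirst.2 (fun h ↦ hxv h.1) hv
  · by_contra hzv
    exact hlast.2 (fun h ↦ hzv h.2) hv

/-- `u` and `v` are joined by an open walk; d-separation is the failure of this relation. -/
def OpenConnected (D : V → V → Prop) (Z : Set V) (u v : V) : Prop :=
  ∃ p, IsOpenWalk D Z p ∧ u ∈ p.head? ∧ v ∈ p.getLast?

theorem exists_eq_append_of_duplicate (h : List.Duplicate v p) :
    ∃ s m t, p = s ++ v :: (m ++ v :: t) := by
  induction h with
  | cons_mem h =>
    obtain ⟨m, t, rfl⟩ := List.append_of_mem h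
    exact ⟨[], m, t, rfl⟩
  | @cons_duplicate y _ _ ih =>
    obtain ⟨s, m, t, rfl⟩ := ih
    exact ⟨y :: s, m, t, rfl⟩

theorem IsOpenWalk.exists_nodup (hp : IsOpenWalk D Z p) (hu : u ∈ p.head?) (hw : w ∈ p.getLast?) :
    ∃ q, IsOpenWalk D Z q ∧ u ∈ q.head? ∧ w ∈ q.getLast? ∧ q.Nodup := by
  induction hn : p.length using Nat.strong_induction_on generalizing p with | _ n ih
  subst hn
  by_cases hnodup : p.Nodup
  · exact ⟨p, hp, hu, hw, hnodup⟩
  obtain ⟨v, hv⟩ := List.exists_duplicate_iff_not_nodup.2 hnodup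
  obtain ⟨s, m, t, rfl⟩ := exists_eq_append_of_duplicate hv
  exact ih (s ++ v :: t).length (by simp) hp.remove_cycle (by cases s <;> simp_all)
    (by simpa [List.getLast?_cons] using hw) rfl

theorem dSep_iff_forall_not_openConnected :
    DSep D S T Z ↔ ∀ s ∈ S, ∀ t ∈ T, ¬ OpenConnected D Z s t := by
  refine forall₄_congr fun s _ t _ ↦ ⟨?_, fun h p hp ↦ ?_⟩
  · rintro h ⟨p, hp, hs, ht⟩
    obtain ⟨q, hq, hs, ht, hnodup⟩ := hp.exists_nodup hs ht
    exact not_blocked_iff.2 hq.active (h q ⟨hq.isChain, hs, ht, hnodup⟩)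
  · by_contra hblocked
    exact h ⟨p, ⟨hp.1, not_blocked_iff.1 hblocked⟩, hp.2.1, hp.2.2.1⟩

theorem reachableIn_moral_of_adj (h : D u v ∨ D v u ∨ ∃ w ∈ U, D u w ∧ D v w)
    (hu : u ∈ U) (hv : v ∈ U) (huS : u ∈ S) (hvS : v ∈ S) : ReachableIn (moral D U) S u v := by
  obtain rfl | hne := eq_or_ne u v
  · exact .refl huS
  · exact .of_adj (moral_adj.2 ⟨hne, hu, hv, h⟩) huS hvS

theorem IsOpenWalk.reachableIn_moral [Std.Asymm D] {t : List V} {u : V}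
    (hp : IsOpenWalk D Z (u :: t)) (hw : w ∈ (u :: t).getLast?) (hU : ∀ x ∈ u :: t, x ∈ U)
    (huZ : u ∉ Z) (hwZ : w ∉ Z) : ReachableIn (moral D U) Zᶜ u w := by
  match t with
  | [] =>
    obtain rfl : u = w := by simpa using hw
    exact .refl huZ
  | [v] =>
    obtain rfl : v = w := by simpa using hw
    have huv := List.isChain_pair.1 hp.isChain
    exact reachableIn_moral_of_adj (by tauto) (hU u (by simp)) (hU v (by simp)) huZ hwZ
  | v :: x :: t =>
    have hactive : Active D Z u v x := hp.active ⟨[], t, rfl⟩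
    have htail : IsOpenWalk D Z (v :: x :: t) := hp.infix (List.suffix_cons u _).isInfix
    by_cases hcollider : D u v ∧ D x v
    · have hxZ : x ∉ Z := by
        cases t with
        | nil => simp_all
        | cons y t => exact (htail.active ⟨[], t, rfl⟩).2 fun h ↦ asymm h.1 hcollider.2
      have hux : ReachableIn (moral D U) Zᶜ u x :=
        reachableIn_moral_of_adj (.inr (.inr ⟨v, hU v (by simp), hcollider⟩)) (hU u (by simp))
          (hU x (by simp)) huZ hxZ
      exact hux.trans ((htail.infix (List.suffix_cons v _).isInfix).reachableIn_moral
        (by simpa using hw) (by simp_all) hxZ hwZ)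
    · have hvZ : v ∉ Z := hactive.2 hcollider
      have huv := (List.isChain_cons_cons.1 hp.isChain).1
      exact (reachableIn_moral_of_adj (by tauto) (hU u (by simp)) (hU v (by simp)) huZ hvZ).trans
        (htail.reachableIn_moral (by simpa using hw) (by simp_all) hvZ hwZ)
termination_by t.length

theorem isOpenWalk_of_isChain [Std.Asymm D] (hp : p.IsChain D) (hpZ : ∀ x ∈ p, x ∉ Z) :
    IsOpenWalk D Z p := by
  refine ⟨hp.imp fun _ _ ↦ .inl, fun x y z h ↦ ⟨fun hy ↦ ?_, fun _ ↦ hpZ y (h.subset (by simp))⟩⟩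
  have hyz : D y z := by simpa using (hp.infix h).tail
  exact absurd hy.2 (asymm hyz)

theorem exists_isOpenWalk_cons_of_reflTransGen [Std.Asymm D] (hvw : ReflTransGen D v w)
    (hv : v ∉ anc D Z) :
    ∃ t, IsOpenWalk D Z (v :: t) ∧ (∀ z ∈ t.head?, D v z) ∧ w ∈ (v :: t).getLast? := by
  obtain ⟨t, ht, hw⟩ := List.exists_isChain_cons_of_relationReflTransGen hvw
  refine ⟨t, isOpenWalk_of_isChain ht fun x hx hxZ ↦ ?_, (List.isChain_cons.1 ht).1,
    hw ▸ List.getLast?_eq_some_getLast _⟩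
  have hvx : ReflTransGen D v x := by
    obtain rfl | hx := List.mem_cons.1 hx
    · exact .refl
    · exact (ht.imp fun _ _ ↦ ReflTransGen.single).rel_cons hx
  exact hv ⟨x, hxZ, hvx⟩

theorem IsOpenWalk.exists_openConnected_parent [Std.Asymm D] (hp : IsOpenWalk D Z (s ++ [v]))
    (ha : a ∈ (s ++ [v]).head?) (haS : a ∈ S) (hv : v ∈ anc D (S ∪ T ∪ Z)) (huv : D u v)
    (hs : v ∈ Z → ∀ x ∈ s.getLast?, D x v) :
    (∃ b ∈ S, OpenConnected D Z b u) ∨ ∃ b ∈ S, ∃ c ∈ T, OpenConnected D Z b c := by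
  by_cases hvZ : v ∈ anc D Z
  · refine .inl ⟨a, haS, s ++ [v, u], hp.append_cons (isOpenWalk_pair (.inr huv)) ?_,
      by cases s <;> simp_all, by simp⟩
    intro x hx z hz
    obtain rfl : u = z := by simpa using hz
    exact ⟨fun _ ↦ hvZ, fun h hv ↦ h ⟨hs hv x hx, huv⟩⟩
  have hv_notMem : v ∉ Z := fun h ↦ hvZ (subset_anc h)
  obtain ⟨w, (hw | hw) | hw, hvw⟩ := hv
  · obtain ⟨t, ht, htv, hwt⟩ := exists_isOpenWalk_cons_of_reflTransGen hvw hvZ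
    refine .inl ⟨w, hw, t.reverse ++ [v, u], .append_cons (by simpa using ht.reverse)
      (isOpenWalk_pair (.inr huv)) ?_, ?_, by simp⟩
    · exact fun z hz _ _ ↦ ⟨fun h ↦ absurd h.1 (asymm (htv z (by simpa using hz))),
        fun _ ↦ hv_notMem⟩
    · simp only [List.getLast?_cons, Option.mem_def] at hwt
      simp only [List.head?_append, List.head?_reverse, List.head?_cons, Option.mem_def]
      grind
  · obtain ⟨t, ht, htv, hwt⟩ := exists_isOpenWalk_cons_of_reflTransGen hvw hvZ
    refine .inr ⟨a, haS, w, hw, s ++ v :: t, hp.append_cons ht ?_, by cases s <;> simp_all,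
      by simpa using hwt⟩
    exact fun _ _ z hz ↦ ⟨fun h ↦ absurd h.2 (asymm (htv z hz)), fun _ ↦ hv_notMem⟩
  · exact absurd ⟨w, hw, hvw⟩ hvZ

theorem OpenConnected.exists_openConnected_of_moral_adj [Std.Asymm D] (h : OpenConnected D Z a v)
    (haS : a ∈ S) (hvZ : v ∉ Z) (hvu : (moral D (anc D (S ∪ T ∪ Z))).Adj v u) :
    (∃ b ∈ S, OpenConnected D Z b u) ∨ ∃ b ∈ S, ∃ c ∈ T, OpenConnected D Z b c := by
  obtain ⟨p, hp, ha, hv⟩ := h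
  obtain ⟨s, rfl⟩ := List.getLast?_eq_some_iff.1 hv
  have concat {w : V} (hvw : D v w) : IsOpenWalk D Z (s ++ [v, w]) := by
    refine hp.append_cons (isOpenWalk_pair (.inl hvw)) fun x _ z hz ↦ ?_
    obtain rfl : w = z := by simpa using hz
    exact ⟨fun h ↦ absurd h.2 (asymm hvw), fun _ ↦ hvZ⟩
  obtain ⟨-, hv_anc, -, hvu | huv | ⟨w, hw, hvw, huw⟩⟩ := moral_adj.1 hvu
  · exact .inl ⟨a, haS, _, concat hvu, by cases s <;> simp_all, by simp⟩
  · exact hp.exists_openConnected_parent ha haS hv_anc huv (absurd · hvZ)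
  · refine IsOpenWalk.exists_openConnected_parent (s := s ++ [v]) (by simpa using concat hvw)
      (by cases s <;> simp_all) haS hw huw fun _ x hx ↦ ?_
    obtain rfl : v = x := by simpa using hx
    exact hvw

theorem exists_openConnected_of_reachableIn_moral [Std.Asymm D] (hb : OpenConnected D Z a v)
    (haS : a ∈ S) (hvT : ReachableIn (moral D (anc D (S ∪ T ∪ Z))) Zᶜ v w) (hw : w ∈ T) :
    ∃ b ∈ S, ∃ c ∈ T, OpenConnected D Z b c := by
  obtain ⟨p, hp⟩ := hvT
  induction p generalizing a with
  | nil => exact ⟨a, haS, _, hw, hb⟩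
  | cons hvu q ih =>
    simp only [SimpleGraph.Walk.support_cons, List.forall_mem_cons] at hp
    obtain ⟨b, hbS, hb⟩ | h := hb.exists_openConnected_of_moral_adj haS hp.1 hvu
    · exact ih hb hbS hw hp.2
    · exact h

theorem dSep_iff_uSep_moral [Std.Asymm D] (hS : Disjoint S Z) (hT : Disjoint T Z) :
    DSep D S T Z ↔ USep (moral D (anc D (S ∪ T ∪ Z))) S T Z := by
  rw [dSep_iff_forall_not_openConnected, uSep_iff_forall_not_reachableIn]
  refine ⟨fun h s hs t ht hreach ↦ ?_, fun h s hs t ht ⟨p, hp, hsp, htp⟩ ↦ h s hs t ht ?_⟩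
  · obtain ⟨b, hb, c, hc, hbc⟩ := exists_openConnected_of_reachableIn_moral
      ⟨[s], isOpenWalk_singleton, rfl, rfl⟩ hs hreach ht
    exact h b hb c hc hbc
  · obtain ⟨p, rfl⟩ := List.head?_eq_some_iff.1 hsp
    refine hp.reachableIn_moral htp (fun x hx ↦ anc_mono ?_ (hp.mem_anc hsp htp hx))
      (hS.notMem_of_mem_left hs) (hT.notMem_of_mem_left ht)
    grind

end DSeparation

/-! ### The adjustment criterion as a cut -/

section Adjustment

variable {V : Type*} {D : V → V → Prop} {A Y a b u v w : V} {L N S T U Z : Set V}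

theorem Acyclic.asymm (h : Acyclic D) : Std.Asymm D :=
  ⟨fun u v huv hvu ↦ h u v huv (.single hvu)⟩

instance [Std.Asymm D] : Std.Asymm (pbd D A Y) :=
  ⟨fun _ _ huv hvu ↦ asymm huv.1 hvu.1⟩

theorem left_mem_forb : A ∈ forb D A Y :=
  .inr rfl

theorem right_mem_forb (h : ReflTransGen D A Y) : Y ∈ forb D A Y := by
  obtain rfl | hYA := eq_or_ne Y A
  · exact left_mem_forb
  · exact .inl ⟨Y, ⟨hYA, h, .refl⟩, .refl⟩

theorem forb_subset_desc : forb D A Y ⊆ desc D {A} := by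
  rintro v (⟨w, ⟨-, hAw, -⟩, hwv⟩ | rfl)
  · exact ⟨A, rfl, hAw.trans hwv⟩
  · exact ⟨v, rfl, .refl⟩

theorem anc_eq_of_subset_of_subset_anc (hST : S ⊆ T) (hTS : T ⊆ anc D S) : anc D T = anc D S :=
  Subset.antisymm (fun _ ⟨_, hw, hvw⟩ ↦ mem_anc_of_reflTransGen hvw (hTS hw)) (anc_mono hST)

theorem anc_pbd (hA : A ∈ S) : anc (pbd D A Y) S = anc D S := by
  refine Subset.antisymm ?_ ?_
  · rintro v ⟨w, hw, hvw⟩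
    exact ⟨w, hw, ReflTransGen.mono (fun _ _ h ↦ h.1) _ _ hvw⟩
  · rintro v ⟨w, hw, hvw⟩
    induction hvw using ReflTransGen.head_induction_on with
    | refl => exact subset_anc hw
    | @head x y hxy _ ih =>
      by_cases hx : x = A
      · exact subset_anc (hx ▸ hA)
      · exact mem_anc_of_reflTransGen (.single ⟨hxy, fun h ↦ hx h.1⟩) ih

theorem ReachableIn.mem_of_moral (h : ReachableIn (moral D U) S u v) (hne : u ≠ v) :
    u ∈ U ∧ v ∈ U := by
  have left_mem {u v : V} (h : ReachableIn (moral D U) S u v) (hne : u ≠ v) : u ∈ U := by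
    obtain ⟨_ | ⟨hadj, -⟩, -⟩ := h
    · exact absurd rfl hne
    · exact (moral_adj.1 hadj).2.1
  exact ⟨left_mem h hne, left_mem h.symm hne.symm⟩

theorem h1_adj_iff : (H1 D A Y L N).Adj a b ↔
    (eliminate (H0 D A Y L) (Ignore D A Y L N)).Adj a b ∨
      a ≠ b ∧ a ∈ H1verts D A Y L N ∧ b ∈ H1verts D A Y L N ∧
        (a ∈ ({A, Y} : Set V) ∧ b ∈ L ∨ b ∈ ({A, Y} : Set V) ∧ a ∈ L) := by
  have exists_isPath_iff (u v : V) : (∃ p : List V, IsPath (H0 D A Y L).Adj u v p ∧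
        ∀ x ∈ p, x ≠ u → x ≠ v → x ∈ Ignore D A Y L N) ↔
      ReachableIn (H0 D A Y L) ({u, v} ∪ Ignore D A Y L N) u v := by
    simp only [reachableIn_iff_exists_isPath, mem_union, mem_insert_iff, mem_singleton_iff]
    grind
  have reachableIn_comm : ReachableIn (H0 D A Y L) ({b, a} ∪ Ignore D A Y L N) b a ↔
      ReachableIn (H0 D A Y L) ({a, b} ∪ Ignore D A Y L N) a b := by
    rw [pair_comm]
    exact ⟨.symm, .symm⟩
  have mem_ancAYL (h : ReachableIn (H0 D A Y L) ({a, b} ∪ Ignore D A Y L N) a b) (hne : a ≠ b) :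
      a ∈ ancAYL D A Y L ∧ b ∈ ancAYL D A Y L := h.mem_of_moral hne
  simp only [H1, SimpleGraph.fromRel_adj, exists_isPath_iff, reachableIn_comm, eliminate, H1verts,
    mem_sdiff, mem_insert_iff, mem_singleton_iff]
  grind

theorem isCut_iff {Vs : Set V} {H : SimpleGraph V} :
    IsCut Vs H A Y Z ↔ (Z ⊆ Vs ∧ A ∉ Z ∧ Y ∉ Z) ∧ ¬ ReachableIn H Zᶜ A Y := by
  rw [← uSep_singleton_iff_not_reachableIn]
  simp [IsCut, USep, ← disjoint_iff_inter_eq_empty, and_assoc]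

theorem subset_h1verts_iff (hY : Y ∈ forb D A Y) (hZ : Z ⊆ ancAYL D A Y L) :
    Z ⊆ H1verts D A Y L N ∧ A ∉ Z ∧ Y ∉ Z ↔ Disjoint Z (forb D A Y) ∧ Z ⊆ N := by
  have hA : A ∈ forb D A Y := left_mem_forb
  simp only [H1verts, Ignore, disjoint_left, subset_def, mem_sdiff, mem_inter_iff, mem_union,
    mem_insert_iff, mem_singleton_iff, mem_univ, true_and]
  grind

theorem reachableIn_h1_iff_reachableIn_h0 (hLZ : L ⊆ Z) (hZ : Z ⊆ H1verts D A Y L N) (hA : A ∉ Z) :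
    ReachableIn (H1 D A Y L N) Zᶜ A Y ↔ ReachableIn (H0 D A Y L) Zᶜ A Y := by
  rw [reachableIn_congr (H' := eliminate (H0 D A Y L) (Ignore D A Y L N)),
    reachableIn_eliminate_iff (S := Zᶜ) (fun v hv hvZ ↦ (hZ hvZ).2 hv) hA (by simp [Ignore])
      (by simp [Ignore])]
  intro a ha b hb
  rw [h1_adj_iff]
  grind

theorem dSep_pbd_iff_not_reachableIn_h0 [Std.Asymm D] (hLZ : L ⊆ Z) (hZ : Z ⊆ ancAYL D A Y L)
    (hA : A ∉ Z) (hY : Y ∉ Z) :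
    DSep (pbd D A Y) {A} {Y} Z ↔ ¬ ReachableIn (H0 D A Y L) Zᶜ A Y := by
  have hanc : anc (pbd D A Y) ({A} ∪ {Y} ∪ Z) = ancAYL D A Y L := by
    rw [anc_pbd (by simp), singleton_union]
    exact anc_eq_of_subset_of_subset_anc (union_subset_union_right _ hLZ)
      (union_subset (subset_union_left.trans subset_anc) hZ)
  rw [dSep_iff_uSep_moral (by simpa) (by simpa), hanc, uSep_singleton_iff_not_reachableIn, H0]

theorem subset_of_not_reachableIn_h1 (hL : L ⊆ H1verts D A Y L N) (hAL : A ∉ L) (hYL : Y ∉ L)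
    (hA : A ∉ Z) (hY : Y ∉ Z) (h : ¬ ReachableIn (H1 D A Y L N) Zᶜ A Y) : L ⊆ Z := by
  intro l hl
  by_contra hlZ
  have hA_verts : A ∈ H1verts D A Y L N := ⟨subset_anc (by simp), by simp [Ignore]⟩
  have hY_verts : Y ∈ H1verts D A Y L N := ⟨subset_anc (by simp), by simp [Ignore]⟩
  have hAl : (H1 D A Y L N).Adj A l :=
    h1_adj_iff.2 (.inr ⟨by grind, hA_verts, hL hl, by simp [hl]⟩)
  have hlY : (H1 D A Y L N).Adj l Y :=
    h1_adj_iff.2 (.inr ⟨by grind, hL hl, hY_verts, by simp [hl]⟩)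
  exact h ((ReachableIn.of_adj hAl hA hlZ).trans (.of_adj hlY hlZ hY))

theorem stmt3_general [Std.Asymm D] (hAY : ReflTransGen D A Y) (hL : Disjoint L (forb D A Y))
    (hLN : L ⊆ N) (hZ : Z ⊆ ancAYL D A Y L) :
    GAC D A Y L N Z ↔ IsCut (H1verts D A Y L N) (H1 D A Y L N) A Y Z := by
  have hY : Y ∈ forb D A Y := right_mem_forb hAY
  have hLverts := (subset_h1verts_iff hY (subset_union_right.trans subset_anc)).2 ⟨hL, hLN⟩
  rw [GAC, isCut_iff, ← disjoint_iff_inter_eq_empty]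
  constructor
  · rintro ⟨hsep, hforb, hLZ, hZN⟩
    obtain ⟨hverts, hA, hY⟩ := (subset_h1verts_iff hY hZ).2 ⟨hforb, hZN⟩
    rw [reachableIn_h1_iff_reachableIn_h0 hLZ hverts hA,
      ← dSep_pbd_iff_not_reachableIn_h0 hLZ hZ hA hY]
    exact ⟨⟨hverts, hA, hY⟩, hsep⟩
  · rintro ⟨⟨hverts, hA, hYZ⟩, hcut⟩
    obtain ⟨hforb, hZN⟩ := (subset_h1verts_iff hY hZ).1 ⟨hverts, hA, hYZ⟩
    have hLZ : L ⊆ Z :=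
      subset_of_not_reachableIn_h1 hLverts.1 hLverts.2.1 hLverts.2.2 hA hYZ hcut
    rw [reachableIn_h1_iff_reachableIn_h0 hLZ hverts hA,
      ← dSep_pbd_iff_not_reachableIn_h0 hLZ hZ hA hYZ] at hcut
    exact ⟨hcut, hforb, hLZ, hZN⟩

end Adjustment

/-- Part 2 of Lemma 5 (statement 3): for `Z ⊆ an_G({A,Y} ∪ L)`, `Z` satisfies the
graphical adjustment criterion iff `Z` is an `A`–`Y` cut in `H¹`. -/
theorem stmt3 {V : Type*} [Fintype V] [DecidableEq V]
    (D : V → V → Prop) (hacy : Acyclic D)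
    (A Y : V) (L N : Set V)
    (hAY : A ≠ Y) (hAancY : Relation.ReflTransGen D A Y)
    (hLnd : L ∩ desc D {A} = ∅) (hLY : Y ∉ L)
    (hN : {A, Y} ∪ L ⊆ N)
    (Z : Set V) (hZanc : Z ⊆ ancAYL D A Y L) :
    GAC D A Y L N Z ↔ IsCut (H1verts D A Y L N) (H1 D A Y L N) A Y Z := by
  have : Std.Asymm D := hacy.asymm
  exact stmt3_general hAancY ((disjoint_iff_inter_eq_empty.2 hLnd).mono_right forb_subset_desc)
    (subset_union_right.trans hN) hZanc

end CausalGraph
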